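/- arXiv:1911.03467 — 5 statements merged into one kernel-verified Lean document; each statement's English description precedes it below -/
import Mathlib

section
/- Let C be a copula and let μ be a probability measure on [0,1]² satisfying μ([0,u]×[0,v]) = C(u,v) for all u,v ∈ [0,1] (the measure induced by C). Let τ = τ(C) = 4·∫_{[0,1]²} C dμ − 1 and β(C) = 4·C(1/2,1/2) − 1. Then β(C) is bounded below by −1 if τ ≤ 0 and by 1 − 2·√(1−τ) if τ > 0, and β(C) is bounded above by 1 if τ ≥ 0 and by −1 + 2·√(1+τ) if τ < 0. -/
open MeasureTheory

/-- A (bivariate) copula: boundary conditions on `[0,1]` and the 2-increasing property. -/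
def IsCopula (C : ℝ → ℝ → ℝ) : Prop :=
  (∀ u ∈ Set.Icc (0:ℝ) 1, C u 0 = 0 ∧ C 0 u = 0 ∧ C u 1 = u ∧ C 1 u = u) ∧
  (∀ u₁ u₂ v₁ v₂ : ℝ, 0 ≤ u₁ → u₁ ≤ u₂ → u₂ ≤ 1 → 0 ≤ v₁ → v₁ ≤ v₂ → v₂ ≤ 1 →
    0 ≤ C u₁ v₁ + C u₂ v₂ - C u₁ v₂ - C u₂ v₁)

/-- Blomqvist's beta of a copula. -/
noncomputable def blomqvistBeta (C : ℝ → ℝ → ℝ) : ℝ :=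
  4 * C (1/2) (1/2) - 1

/-!
If `X` and `Y` are independent with law `μ`, then `∫ C ∂μ = P(Y ≤ X)` for the coordinatewise order.
Cut the unit square into four quadrants at `(a, b)`. A point of the lower left quadrant is below
every point of the upper right one, which bounds `P(Y ≤ X)` from below by the product of their
masses. As `μ` has no atoms, `2 P(Y ≤ X) + P(X and Y are incomparable) = 1`, and a point of the
upper left quadrant is incomparable with every point of the lower right one, which bounds
`P(Y ≤ X)` from above. At `a = b = 1 / 2` these bounds read `(1 + β)² ≤ 4 (1 + τ)` and
`(1 - β)² ≤ 4 (1 - τ)`.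
-/

open Set

section ProductMass

variable {α β : Type*} [MeasurableSpace α] [MeasurableSpace β]

lemma measureReal_sdiff_prod_sdiff (μ : Measure (α × β)) [IsFiniteMeasure μ] {s₁ s₂ : Set α}
    {t₁ t₂ : Set β} (hs : s₁ ⊆ s₂) (ht : t₁ ⊆ t₂) (hs₁ : MeasurableSet s₁)
    (ht₁ : MeasurableSet t₁) :
    μ.real ((s₂ \ s₁) ×ˢ (t₂ \ t₁)) =
      μ.real (s₁ ×ˢ t₁) + μ.real (s₂ ×ˢ t₂) - μ.real (s₁ ×ˢ t₂) - μ.real (s₂ ×ˢ t₁) := by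
  have cut_fst (t : Set β) : μ.real (s₁ ×ˢ t) + μ.real ((s₂ \ s₁) ×ˢ t) = μ.real (s₂ ×ˢ t) := by
    simpa only [prod_inter_prod, inter_eq_self_of_subset_right hs, inter_univ, prod_sdiff_prod,
      sdiff_univ, prod_empty, empty_union]
      using measureReal_inter_add_sdiff (μ := μ) (s := s₂ ×ˢ t) (hs₁.prod .univ)
  have cut_snd (s : Set α) : μ.real (s ×ˢ t₁) + μ.real (s ×ˢ (t₂ \ t₁)) = μ.real (s ×ˢ t₂) := by
    simpa only [prod_inter_prod, inter_eq_self_of_subset_right ht, inter_univ, prod_sdiff_prod,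
      sdiff_univ, empty_prod, union_empty]
      using measureReal_inter_add_sdiff (μ := μ) (s := s ×ˢ t₂) (MeasurableSet.univ.prod ht₁)
  linarith [cut_fst (t₂ \ t₁), cut_snd s₁, cut_snd s₂]

lemma measure_prod_self_diagonal [MeasurableEq α] (μ : Measure α) [SFinite μ]
    [NullSingletonClass μ] : (μ.prod μ) (diagonal α) = 0 := by
  rw [Measure.measure_prod_null measurableSet_diagonal]
  refine .of_forall fun x ↦ ?_
  have fiber_eq : Prod.mk x ⁻¹' diagonal α = {x} := by ext y; simp [eq_comm]
  simp [fiber_eq]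

lemma two_mul_measureReal_mul_le_measureReal_incompRel [Preorder α] (μ : Measure α)
    [IsFiniteMeasure μ] {s t : Set α} (hs : MeasurableSet s) (ht : MeasurableSet t)
    (hst : ∀ x ∈ s, ∀ y ∈ t, IncompRel (· ≤ ·) x y) :
    2 * (μ.real s * μ.real t) ≤ (μ.prod μ).real {z | IncompRel (· ≤ ·) z.1 z.2} := by
  have disjoint_st : Disjoint s t :=
    disjoint_left.2 fun x hxs hxt ↦ (hst x hxs x hxt).ne rfl
  calc 2 * (μ.real s * μ.real t)
      = (μ.prod μ).real (s ×ˢ t ∪ t ×ˢ s) := by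
        rw [measureReal_union (disjoint_st.set_prod_left t s) (ht.prod hs),
          measureReal_prod_prod, measureReal_prod_prod]
        ring
    _ ≤ (μ.prod μ).real {z | IncompRel (· ≤ ·) z.1 z.2} := by
        refine measureReal_mono (union_subset ?_ ?_)
        · exact fun z hz ↦ hst z.1 hz.1 z.2 hz.2
        · exact fun z hz ↦ (hst z.2 hz.2 z.1 hz.1).symm

end ProductMass

section IntegralIic

variable {α : Type*} [TopologicalSpace α] [SecondCountableTopology α] [MeasurableSpace α]
  [OpensMeasurableSpace α] (μ : Measure α)

lemma integral_measureReal_Iic [Preorder α] [OrderClosedTopology α] [IsFiniteMeasure μ] :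
    ∫ x, μ.real (Iic x) ∂μ = (μ.prod μ).real {z | z.2 ≤ z.1} := by
  have measurableSet_ge : MeasurableSet {z : α × α | z.2 ≤ z.1} :=
    (isClosed_le continuous_snd continuous_fst).measurableSet
  rw [measureReal_def, Measure.prod_apply measurableSet_ge]
  exact integral_toReal (measurable_measure_prodMk_left measurableSet_ge).aemeasurable
    (.of_forall fun _ ↦ measure_lt_top _ _)

lemma measureReal_mul_le_integral_measureReal_Iic [Preorder α] [OrderClosedTopology α]
    [IsFiniteMeasure μ] {s t : Set α} (hst : ∀ x ∈ s, ∀ y ∈ t, x ≤ y) :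
    μ.real s * μ.real t ≤ ∫ x, μ.real (Iic x) ∂μ := by
  rw [integral_measureReal_Iic, mul_comm, ← measureReal_prod_prod]
  exact measureReal_mono fun z hz ↦ hst z.2 hz.2 z.1 hz.1

lemma two_mul_integral_measureReal_Iic_add_measureReal_incompRel [PartialOrder α]
    [OrderClosedTopology α] [IsProbabilityMeasure μ] [NullSingletonClass μ] :
    2 * ∫ x, μ.real (Iic x) ∂μ + (μ.prod μ).real {z | IncompRel (· ≤ ·) z.1 z.2} = 1 := by
  set ge : Set (α × α) := {z | z.2 ≤ z.1}
  set le : Set (α × α) := {z | z.1 ≤ z.2}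
  have measurableSet_ge : MeasurableSet ge := measurableSet_le measurable_snd measurable_fst
  have measurableSet_le : MeasurableSet le := measurableSet_le measurable_fst measurable_snd
  have measureReal_le : (μ.prod μ).real le = (μ.prod μ).real ge :=
    congrArg ENNReal.toReal <|
      Measure.measurePreserving_swap.measure_preimage measurableSet_ge.nullMeasurableSet
  have aedisjoint : AEDisjoint (μ.prod μ) ge le :=
    measure_mono_null (fun z hz ↦ le_antisymm hz.2 hz.1) (measure_prod_self_diagonal μ)
  have incompRel_eq : {z : α × α | IncompRel (· ≤ ·) z.1 z.2} = (ge ∪ le)ᶜ := by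
    ext z
    simp only [IncompRel, ge, le, mem_compl_iff, mem_union, mem_ofPred_eq, not_or]
    exact and_comm
  rw [integral_measureReal_Iic, incompRel_eq,
    probReal_compl_eq_one_sub (measurableSet_ge.union measurableSet_le),
    measureReal_union₀ measurableSet_le.nullMeasurableSet aedisjoint, measureReal_le]
  ring

end IntegralIic

namespace IsCopula

variable {C : ℝ → ℝ → ℝ} {u v : ℝ}

lemma apply_zero_right (hC : IsCopula C) (hu : u ∈ Icc 0 1) : C u 0 = 0 := (hC.1 u hu).1

lemma apply_zero_left (hC : IsCopula C) (hv : v ∈ Icc 0 1) : C 0 v = 0 := (hC.1 v hv).2.1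

lemma apply_one_right (hC : IsCopula C) (hu : u ∈ Icc 0 1) : C u 1 = u := (hC.1 u hu).2.2.1

lemma apply_one_left (hC : IsCopula C) (hv : v ∈ Icc 0 1) : C 1 v = v := (hC.1 v hv).2.2.2

lemma apply_nonneg (hC : IsCopula C) (hu : u ∈ Icc 0 1) (hv : v ∈ Icc 0 1) : 0 ≤ C u v := by
  have := hC.2 0 u 0 v le_rfl hu.1 hu.2 le_rfl hv.1 hv.2
  linarith [hC.apply_zero_right (left_mem_Icc.2 zero_le_one), hC.apply_zero_right hu,
    hC.apply_zero_left hv]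

lemma apply_le_left (hC : IsCopula C) (hu : u ∈ Icc 0 1) (hv : v ∈ Icc 0 1) : C u v ≤ u := by
  have := hC.2 0 u v 1 le_rfl hu.1 hu.2 hv.1 hv.2 le_rfl
  linarith [hC.apply_zero_left hv, hC.apply_zero_left (right_mem_Icc.2 zero_le_one),
    hC.apply_one_right hu]

lemma blomqvistBeta_mem_Icc (hC : IsCopula C) : blomqvistBeta C ∈ Icc (-1) 1 := by
  have half_mem : (1 / 2 : ℝ) ∈ Icc 0 1 := by norm_num
  have := hC.apply_nonneg half_mem half_mem
  have := hC.apply_le_left half_mem half_mem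
  constructor <;> unfold blomqvistBeta <;> linarith

end IsCopula

/-- The measure `μ` is induced by the copula `C`. The measure lives on all of `ℝ × ℝ`, and only its
values on boxes inside the unit square are prescribed. -/
def IsInducedBy (μ : Measure (ℝ × ℝ)) (C : ℝ → ℝ → ℝ) : Prop :=
  ∀ u ∈ Icc (0 : ℝ) 1, ∀ v ∈ Icc (0 : ℝ) 1, μ (Icc 0 u ×ˢ Icc 0 v) = ENNReal.ofReal (C u v)

/-- Kendall's tau of the copula `C`, where `μ` is the measure induced by `C`. -/
noncomputable def kendallTau (C : ℝ → ℝ → ℝ) (μ : Measure (ℝ × ℝ)) : ℝ :=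
  4 * (∫ p in Icc (0 : ℝ) 1 ×ˢ Icc (0 : ℝ) 1, C p.1 p.2 ∂μ) - 1

namespace IsInducedBy

variable {C : ℝ → ℝ → ℝ} {μ : Measure (ℝ × ℝ)}

lemma measureReal_Icc_prod_Icc (hμ : IsInducedBy μ C) (hC : IsCopula C)
    {u v : ℝ} (hu : u ∈ Icc 0 1) (hv : v ∈ Icc 0 1) :
    μ.real (Icc 0 u ×ˢ Icc 0 v) = C u v := by
  rw [measureReal_def, hμ u hu v hv, ENNReal.toReal_ofReal (hC.apply_nonneg hu hv)]

lemma measureReal_Ioc_prod_Ioc [IsFiniteMeasure μ] (hμ : IsInducedBy μ C) (hC : IsCopula C)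
    {u₁ u₂ v₁ v₂ : ℝ} (hu₁ : 0 ≤ u₁) (hu : u₁ ≤ u₂) (hu₂ : u₂ ≤ 1) (hv₁ : 0 ≤ v₁) (hv : v₁ ≤ v₂)
    (hv₂ : v₂ ≤ 1) :
    μ.real (Ioc u₁ u₂ ×ˢ Ioc v₁ v₂) = C u₁ v₁ + C u₂ v₂ - C u₁ v₂ - C u₂ v₁ := by
  have Ioc_eq {a b : ℝ} (ha : 0 ≤ a) : Ioc a b = Icc 0 b \ Icc 0 a := by
    ext x
    simp only [mem_Ioc, mem_sdiff, mem_Icc]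
    grind
  have u₁_mem : u₁ ∈ Icc (0 : ℝ) 1 := ⟨hu₁, hu.trans hu₂⟩
  have u₂_mem : u₂ ∈ Icc (0 : ℝ) 1 := ⟨hu₁.trans hu, hu₂⟩
  have v₁_mem : v₁ ∈ Icc (0 : ℝ) 1 := ⟨hv₁, hv.trans hv₂⟩
  have v₂_mem : v₂ ∈ Icc (0 : ℝ) 1 := ⟨hv₁.trans hv, hv₂⟩
  rw [Ioc_eq hu₁, Ioc_eq hv₁, measureReal_sdiff_prod_sdiff μ (Icc_subset_Icc_right hu)
    (Icc_subset_Icc_right hv) measurableSet_Icc measurableSet_Icc,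
    hμ.measureReal_Icc_prod_Icc hC u₁_mem v₁_mem, hμ.measureReal_Icc_prod_Icc hC u₂_mem v₂_mem,
    hμ.measureReal_Icc_prod_Icc hC u₁_mem v₂_mem, hμ.measureReal_Icc_prod_Icc hC u₂_mem v₁_mem]

variable [IsProbabilityMeasure μ]

lemma ae_mem_unitSquare (hμ : IsInducedBy μ C) (hC : IsCopula C) :
    ∀ᵐ p ∂μ, p ∈ Icc (0 : ℝ) 1 ×ˢ Icc (0 : ℝ) 1 := by
  have one_mem : (1 : ℝ) ∈ Icc 0 1 := right_mem_Icc.2 zero_le_one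
  refine (mem_ae_iff_prob_eq_one (measurableSet_Icc.prod measurableSet_Icc)).2 ?_
  rw [hμ 1 one_mem 1 one_mem, hC.apply_one_right one_mem, ENNReal.ofReal_one]

lemma measureReal_Iic (hμ : IsInducedBy μ C) (hC : IsCopula C)
    {p : ℝ × ℝ} (hp : p ∈ Icc (0 : ℝ) 1 ×ˢ Icc (0 : ℝ) 1) :
    μ.real (Iic p) = C p.1 p.2 := by
  rw [← hμ.measureReal_Icc_prod_Icc hC hp.1 hp.2]
  refine measureReal_congr ?_
  filter_upwards [hμ.ae_mem_unitSquare hC] with q hq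
  exact propext ⟨fun hqp ↦ ⟨⟨hq.1.1, hqp.1⟩, ⟨hq.2.1, hqp.2⟩⟩, fun hqp ↦ ⟨hqp.1.2, hqp.2.2⟩⟩

lemma kendallTau_eq_integral_measureReal_Iic (hμ : IsInducedBy μ C) (hC : IsCopula C) :
    kendallTau C μ = 4 * ∫ p, μ.real (Iic p) ∂μ - 1 := by
  rw [kendallTau, Measure.restrict_eq_self_of_ae_mem (hμ.ae_mem_unitSquare hC)]
  congr 2
  refine integral_congr_ae ?_
  filter_upwards [hμ.ae_mem_unitSquare hC] with p hp
  exact (hμ.measureReal_Iic hC hp).symm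

lemma fst_eq_volume_restrict (hμ : IsInducedBy μ C) (hC : IsCopula C) :
    μ.fst = volume.restrict (Icc 0 1) := by
  refine Measure.ext_of_Iic _ _ fun a ↦ ?_
  have Iic_inter : Iic a ∩ Icc (0 : ℝ) 1 = Icc 0 (min a 1) := by
    ext x
    simp only [mem_inter_iff, mem_Iic, mem_Icc, le_min_iff]
    tauto
  have preimage_ae_eq : Prod.fst ⁻¹' Iic a =ᵐ[μ] Icc 0 (min a 1) ×ˢ Icc 0 1 := by
    filter_upwards [hμ.ae_mem_unitSquare hC] with p hp
    refine propext ⟨fun hpa ↦ ⟨Iic_inter.subset ⟨hpa, hp.1⟩, hp.2⟩, fun hpa ↦ ?_⟩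
    exact (Iic_inter.superset hpa.1).1
  rw [Measure.fst_apply measurableSet_Iic, measure_congr preimage_ae_eq,
    Measure.restrict_apply measurableSet_Iic, Iic_inter, Real.volume_Icc, sub_zero]
  rcases lt_or_ge a 0 with ha | ha
  · have min_lt : min a 1 < 0 := min_lt_of_left_lt ha
    rw [Icc_eq_empty min_lt.not_ge, empty_prod, measure_empty, ENNReal.ofReal_of_nonpos min_lt.le]
  · have min_mem : min a 1 ∈ Icc (0 : ℝ) 1 := ⟨le_min ha zero_le_one, min_le_right a 1⟩
    rw [hμ _ min_mem 1 (right_mem_Icc.2 zero_le_one), hC.apply_one_right min_mem]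

lemma nullSingletonClass (hμ : IsInducedBy μ C) (hC : IsCopula C) : NullSingletonClass μ where
  measure_singleton p := by
    have fst_singleton : μ (Prod.fst ⁻¹' {p.1}) = 0 := by
      rw [← Measure.fst_apply (measurableSet_singleton p.1), hμ.fst_eq_volume_restrict hC,
        measure_singleton]
    exact measure_mono_null (singleton_subset_iff.2 (mem_singleton p.1)) fst_singleton

variable {a b : ℝ}

lemma mul_le_integral_measureReal_Iic (hμ : IsInducedBy μ C) (hC : IsCopula C)
    (ha : a ∈ Icc 0 1) (hb : b ∈ Icc 0 1) :
    C a b * (1 - a - b + C a b) ≤ ∫ p, μ.real (Iic p) ∂μ := by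
  have lower_left : μ.real (Ioc 0 a ×ˢ Ioc 0 b) = C a b := by
    rw [hμ.measureReal_Ioc_prod_Ioc hC le_rfl ha.1 ha.2 le_rfl hb.1 hb.2, hC.apply_zero_left hb,
      hC.apply_zero_right ha, hC.apply_zero_left (left_mem_Icc.2 zero_le_one)]
    ring
  have upper_right : μ.real (Ioc a 1 ×ˢ Ioc b 1) = 1 - a - b + C a b := by
    rw [hμ.measureReal_Ioc_prod_Ioc hC ha.1 ha.2 le_rfl hb.1 hb.2 le_rfl, hC.apply_one_right ha,
      hC.apply_one_left hb, hC.apply_one_left (right_mem_Icc.2 zero_le_one)]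
    ring
  have below : ∀ p ∈ Ioc 0 a ×ˢ Ioc 0 b, ∀ q ∈ Ioc a 1 ×ˢ Ioc b 1, p ≤ q := fun p hp q hq ↦
    ⟨hp.1.2.trans hq.1.1.le, hp.2.2.trans hq.2.1.le⟩
  have mass_le := measureReal_mul_le_integral_measureReal_Iic μ below
  rwa [lower_left, upper_right] at mass_le

lemma integral_measureReal_Iic_le (hμ : IsInducedBy μ C) (hC : IsCopula C)
    (ha : a ∈ Icc 0 1) (hb : b ∈ Icc 0 1) :
    ∫ p, μ.real (Iic p) ∂μ ≤ 1 / 2 - (a - C a b) * (b - C a b) := by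
  have := hμ.nullSingletonClass hC
  have upper_left : μ.real (Ioc 0 a ×ˢ Ioc b 1) = a - C a b := by
    rw [hμ.measureReal_Ioc_prod_Ioc hC le_rfl ha.1 ha.2 hb.1 hb.2 le_rfl, hC.apply_zero_left hb,
      hC.apply_one_right ha, hC.apply_zero_left (right_mem_Icc.2 zero_le_one)]
    ring
  have lower_right : μ.real (Ioc a 1 ×ˢ Ioc 0 b) = b - C a b := by
    rw [hμ.measureReal_Ioc_prod_Ioc hC ha.1 ha.2 le_rfl le_rfl hb.1 hb.2, hC.apply_zero_right ha,
      hC.apply_one_left hb, hC.apply_zero_right (right_mem_Icc.2 zero_le_one)]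
    ring
  have incomparable : ∀ p ∈ Ioc 0 a ×ˢ Ioc b 1, ∀ q ∈ Ioc a 1 ×ˢ Ioc 0 b,
      IncompRel (· ≤ ·) p q := fun p hp q hq ↦
    ⟨fun hpq ↦ (hq.2.2.trans_lt hp.2.1).not_ge hpq.2,
      fun hqp ↦ (hp.1.2.trans_lt hq.1.1).not_ge hqp.1⟩
  have mass_le := two_mul_measureReal_mul_le_measureReal_incompRel μ
    (measurableSet_Ioc.prod measurableSet_Ioc) (measurableSet_Ioc.prod measurableSet_Ioc)
    incomparable
  rw [upper_left, lower_right] at mass_le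
  linarith [two_mul_integral_measureReal_Iic_add_measureReal_incompRel μ]

lemma one_add_blomqvistBeta_sq_le (hμ : IsInducedBy μ C) (hC : IsCopula C) :
    (1 + blomqvistBeta C) ^ 2 ≤ 4 * (1 + kendallTau C μ) := by
  have half_mem : (1 / 2 : ℝ) ∈ Icc 0 1 := by norm_num
  have := hμ.mul_le_integral_measureReal_Iic hC half_mem half_mem
  rw [hμ.kendallTau_eq_integral_measureReal_Iic hC, blomqvistBeta]
  linarith

lemma one_sub_blomqvistBeta_sq_le (hμ : IsInducedBy μ C) (hC : IsCopula C) :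
    (1 - blomqvistBeta C) ^ 2 ≤ 4 * (1 - kendallTau C μ) := by
  have half_mem : (1 / 2 : ℝ) ∈ Icc 0 1 := by norm_num
  have := hμ.integral_measureReal_Iic_le hC half_mem half_mem
  rw [hμ.kendallTau_eq_integral_measureReal_Iic hC, blomqvistBeta]
  linarith

end IsInducedBy

/-- Bounds for Blomqvist's beta of a copula in terms of its Kendall's tau
`τ(C) = 4·∫_{[0,1]²} C dμ − 1`, where `μ` is the probability measure induced by `C`. -/
theorem beta_bounds_of_tau (C : ℝ → ℝ → ℝ) (hC : IsCopula C)
    (μ : Measure (ℝ × ℝ)) [IsProbabilityMeasure μ]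
    (hμ : ∀ u ∈ Set.Icc (0:ℝ) 1, ∀ v ∈ Set.Icc (0:ℝ) 1,
      μ (Set.Icc 0 u ×ˢ Set.Icc 0 v) = ENNReal.ofReal (C u v))
    (τ : ℝ)
    (hτ : τ = 4 * (∫ p in (Set.Icc (0:ℝ) 1 ×ˢ Set.Icc (0:ℝ) 1), C p.1 p.2 ∂μ) - 1) :
    (if τ ≤ 0 then (-1 : ℝ) else 1 - 2 * Real.sqrt (1 - τ)) ≤ blomqvistBeta C ∧
    blomqvistBeta C ≤ (if 0 ≤ τ then (1 : ℝ) else -1 + 2 * Real.sqrt (1 + τ)) := by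
  have hμ : IsInducedBy μ C := hμ
  obtain rfl : τ = kendallTau C μ := hτ
  obtain ⟨neg_one_le, le_one⟩ := hC.blomqvistBeta_mem_Icc
  constructor
  · split_ifs
    · exact neg_one_le
    · have : (1 - blomqvistBeta C) / 2 ≤ √(1 - kendallTau C μ) :=
        Real.le_sqrt_of_sq_le (by linarith [hμ.one_sub_blomqvistBeta_sq_le hC])
      linarith
  · split_ifs
    · exact le_one
    · have : (1 + blomqvistBeta C) / 2 ≤ √(1 + kendallTau C μ) :=
        Real.le_sqrt_of_sq_le (by linarith [hμ.one_add_blomqvistBeta_sq_le hC])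
      linarith
end

section
/- Let t ∈ [−1,1]. Then Gini's gamma of the lower bound copula B̲_t equals γ(B̲_t) = (3/8)(1+t)² − 1; explicitly, 4·∫₀¹ ( B̲_t(u,u) + B̲_t(u,1−u) ) du − 2 = (3/8)(1+t)² − 1. -/
/-- The lower bound copula `B̲_t` of the set of copulas with Blomqvist's beta equal to `t`. -/
noncomputable def Blower (t u v : ℝ) : ℝ :=
  max (max 0 (u + v - 1)) ((1 + t) / 4 - max (1 / 2 - u) 0 - max (1 / 2 - v) 0)

/-!
Subtracting the lower Fréchet–Hoeffding bound `max 0 (u + v - 1)` from `B̲_t` leaves the tent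
`max 0 (a - d)` of height `a = (1 + t) / 4`, where `d = (|u - 1/2| + |v - 1/2| + |u + v - 1|) / 2`.
Since `d` is `|2 * u - 1|` on the diagonal and `|u - 1/2|` on the antidiagonal, for `0 ≤ a ≤ 1/2`
the tent contributes the triangle areas `a ^ 2 / 2` and `a ^ 2`. The lower bound contributes `1 / 4`
on the diagonal and vanishes on the antidiagonal.
-/

open intervalIntegral
open MeasureTheory (volume)

section Integrals

lemma integral_zero_max_zero (b : ℝ) : ∫ x in 0..b, max 0 x = max 0 b ^ 2 / 2 := by
  rcases le_total 0 b with hb | hb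
  · have h_id : Set.EqOn (fun x : ℝ ↦ max 0 x) (fun x ↦ x) (Set.uIcc 0 b) := fun x hx ↦
      max_eq_right (Set.uIcc_of_le hb ▸ hx).1
    rw [integral_congr h_id, integral_id, max_eq_right hb]
    ring
  · have h_zero : Set.EqOn (fun x : ℝ ↦ max 0 x) (fun _ ↦ 0) (Set.uIcc 0 b) := fun x hx ↦
      max_eq_left (Set.uIcc_of_ge hb ▸ hx).2
    rw [integral_congr h_zero, intervalIntegral.integral_zero, max_eq_left hb]
    ring

lemma integral_max_zero (a b : ℝ) :
    ∫ x in a..b, max 0 x = (max 0 b ^ 2 - max 0 a ^ 2) / 2 := by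
  have h_int (c : ℝ) : IntervalIntegrable (fun x : ℝ ↦ max 0 x) volume 0 c :=
    Continuous.intervalIntegrable (by fun_prop) 0 c
  rw [← integral_interval_sub_left (h_int b) (h_int a), integral_zero_max_zero,
    integral_zero_max_zero, sub_div]

lemma integral_neg_self_comp_abs {E : Type*} [NormedAddCommGroup E] [NormedSpace ℝ E]
    {f : ℝ → E} {b : ℝ} (hb : 0 ≤ b) (hf : IntervalIntegrable f volume 0 b) :
    ∫ x in -b..b, f |x| = (2 : ℝ) • ∫ x in 0..b, f x := by
  have h_right : Set.EqOn (fun x ↦ f |x|) f (Set.uIcc 0 b) := fun x hx ↦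
    congrArg f (abs_of_nonneg (Set.uIcc_of_le hb ▸ hx).1)
  have h_int_right : IntervalIntegrable (fun x ↦ f |x|) volume 0 b :=
    hf.congr_uIoo (h_right.symm.mono Set.uIoo_subset_uIcc_self)
  have h_int_left : IntervalIntegrable (fun x ↦ f |x|) volume (-b) 0 := by
    simpa using ((IntervalIntegrable.iff_comp_neg (by simp)).mp h_int_right).symm
  have h_reflect : ∫ x in -b..0, f |x| = ∫ x in 0..b, f |x| := by
    simpa using (integral_comp_neg (a := 0) (b := b) fun x ↦ f |x|).symm
  rw [← integral_add_adjacent_intervals h_int_left h_int_right, h_reflect,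
    integral_congr h_right, two_smul]

lemma integral_tent (a : ℝ) {b : ℝ} (hb : 0 ≤ b) :
    ∫ x in -b..b, max 0 (a - |x|) = max 0 a ^ 2 - max 0 (a - b) ^ 2 := by
  have h_int : IntervalIntegrable (fun x ↦ max 0 (a - x)) volume 0 b :=
    Continuous.intervalIntegrable (by fun_prop) 0 b
  rw [integral_neg_self_comp_abs hb h_int, integral_comp_sub_left (fun x ↦ max 0 x),
    integral_max_zero, sub_zero, smul_eq_mul]
  ring

end Integrals

section Blower

variable (t u v : ℝ)

lemma Blower_eq_max_add_tent :
    Blower t u v = max 0 (u + v - 1) +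
      max 0 ((1 + t) / 4 - (|u - 1 / 2| + |v - 1 / 2| + |u + v - 1|) / 2) := by
  have max_zero_eq (x : ℝ) : max 0 x = (|x| + x) / 2 := by
    rw [sup_eq_half_smul_add_add_abs_sub' ℝ, smul_eq_mul, zero_add, sub_zero]; ring
  have h_dist : max (1 / 2 - u) 0 + max (1 / 2 - v) 0 + max 0 (u + v - 1) =
      (|u - 1 / 2| + |v - 1 / 2| + |u + v - 1|) / 2 := by
    rw [max_comm _ 0, max_comm _ 0, max_zero_eq, max_zero_eq, max_zero_eq,
      abs_sub_comm (1 / 2) u, abs_sub_comm (1 / 2) v]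
    ring
  rw [Blower, ← h_dist, ← max_add_add_left]
  congr 1 <;> ring

lemma Blower_diag :
    Blower t u u = max 0 (2 * u - 1) + max 0 ((1 + t) / 4 - |2 * u - 1|) := by
  have h_abs : |2 * u - 1| = 2 * |u - 1 / 2| := by
    rw [show 2 * u - 1 = 2 * (u - 1 / 2) by ring, abs_mul, abs_two]
  rw [Blower_eq_max_add_tent, ← two_mul u, h_abs]
  ring_nf

lemma Blower_antidiag : Blower t u (1 - u) = max 0 ((1 + t) / 4 - |u - 1 / 2|) := by
  have h_abs : |1 - u - 1 / 2| = |u - 1 / 2| := by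
    rw [abs_sub_comm u]; ring_nf
  rw [Blower_eq_max_add_tent, h_abs, add_sub_cancel, sub_self, max_self, abs_zero]
  ring_nf

lemma integral_Blower_diag :
    ∫ u in 0..1, Blower t u u =
      1 / 4 + (max 0 ((1 + t) / 4) ^ 2 - max 0 ((1 + t) / 4 - 1) ^ 2) / 2 := by
  have h_int {f : ℝ → ℝ} (hf : Continuous f) : IntervalIntegrable f volume (-1) 1 :=
    hf.intervalIntegrable _ _
  calc ∫ u in 0..1, Blower t u u
    _ = 2⁻¹ * ∫ x in -1..1, (max 0 x + max 0 ((1 + t) / 4 - |x|)) := by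
      simp only [Blower_diag]
      rw [integral_comp_mul_sub (fun x ↦ max 0 x + max 0 ((1 + t) / 4 - |x|)) two_ne_zero 1,
        smul_eq_mul]
      norm_num
    _ = 1 / 4 + (max 0 ((1 + t) / 4) ^ 2 - max 0 ((1 + t) / 4 - 1) ^ 2) / 2 := by
      rw [integral_add (h_int (by fun_prop)) (h_int (by fun_prop)), integral_max_zero,
        integral_tent _ zero_le_one, max_eq_right zero_le_one, max_eq_left neg_one_lt_zero.le]
      ring

lemma integral_Blower_antidiag :
    ∫ u in 0..1, Blower t u (1 - u) =
      max 0 ((1 + t) / 4) ^ 2 - max 0 ((1 + t) / 4 - 1 / 2) ^ 2 := by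
  simp only [Blower_antidiag]
  rw [integral_comp_sub_right (fun x ↦ max 0 ((1 + t) / 4 - |x|)),
    ← integral_tent _ one_half_pos.le]
  norm_num

end Blower

/-- Gini's gamma of the lower bound copula `B̲_t` equals `(3/8)(1+t)² − 1`. -/
theorem gamma_Blower (t : ℝ) (ht : t ∈ Set.Icc (-1 : ℝ) 1) :
    4 * (∫ u in (0:ℝ)..1, (Blower t u u + Blower t u (1 - u))) - 2
      = 3 / 8 * (1 + t) ^ 2 - 1 := by
  obtain ⟨ht_lower, ht_upper⟩ := ht
  have h_diag : IntervalIntegrable (fun u ↦ Blower t u u) volume 0 1 :=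
    Continuous.intervalIntegrable (by unfold Blower; fun_prop) 0 1
  have h_antidiag : IntervalIntegrable (fun u ↦ Blower t u (1 - u)) volume 0 1 :=
    Continuous.intervalIntegrable (by unfold Blower; fun_prop) 0 1
  have h_height : max 0 ((1 + t) / 4) = (1 + t) / 4 := max_eq_right (by linarith)
  have h_diag_tail : max 0 ((1 + t) / 4 - 1) = 0 := max_eq_left (by linarith)
  have h_antidiag_tail : max 0 ((1 + t) / 4 - 1 / 2) = 0 := max_eq_left (by linarith)
  rw [integral_add h_diag h_antidiag, integral_Blower_diag, integral_Blower_antidiag,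
    h_height, h_diag_tail, h_antidiag_tail]
  ring
end

section
/- Let t ∈ [−1,1]. Then Gini's gamma of the upper bound copula B̄_t equals γ(B̄_t) = 1 − (3/8)(1−t)²; explicitly, 4·∫₀¹ ( B̄_t(u,u) + B̄_t(u,1−u) ) du − 2 = 1 − (3/8)(1−t)². -/
/-- The upper bound copula `B̄_t` of the set of copulas with Blomqvist's beta equal to `t`. -/
noncomputable def Bupper (t u v : ℝ) : ℝ :=
  min (min u v) ((1 + t) / 4 + max (u - 1 / 2) 0 + max (v - 1 / 2) 0)

/-!
Put `w = |u - 1/2|`. On the diagonal `Bupper t` falls below `min u u = u` by the tent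
`max (s - w) 0`, and on the antidiagonal it falls below `min u (1 - u)` by `2 max (s/2 - w) 0`,
where `s = (1 - t)/4`. A tent of height `r` and slopes `±1` has area `r²`, so the two integrals are
`1/2 - s²` and `1/4 - s²/2`, and `4 (3/4 - 3s²/2) - 2 = 1 - 6s²`.
-/

/-- The tent of height and half-width `r` centred at `c`: slopes `±1`, and zero outside
`[c - r, c + r]`. It measures how far `Bupper t` falls below `min` on both diagonals. -/
noncomputable def tent (c r x : ℝ) : ℝ :=
  max (r - |x - c|) 0

@[fun_prop]
lemma continuous_tent (c r : ℝ) : Continuous (tent c r) := by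
  unfold tent
  fun_prop

lemma support_tent_subset (c r : ℝ) : Function.support (tent c r) ⊆ Set.Ioc (c - r) (c + r) := by
  intro x hx
  have hxc : |x - c| < r := by
    by_contra! h
    exact hx (max_eq_right (sub_nonpos.2 h))
  exact Set.Ioo_subset_Ioc_self (by rwa [← Real.ball_eq_Ioo, Metric.mem_ball, Real.dist_eq])

lemma setIntegral_Ioi_max_sub_zero {a r : ℝ} (har : a ≤ r) :
    ∫ x in Set.Ioi a, max (r - x) 0 = (r - a) ^ 2 / 2 := by
  calc ∫ x in Set.Ioi a, max (r - x) 0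
      = ∫ x in Set.Ioc a r, max (r - x) 0 := by
        refine MeasureTheory.setIntegral_eq_of_subset_of_forall_sdiff_eq_zero measurableSet_Ioi
          Set.Ioc_subset_Ioi_self fun x hx ↦ max_eq_right ?_
        rw [Set.Ioi_sdiff_Ioc, max_eq_right har] at hx
        exact sub_nonpos.2 (le_of_lt hx)
    _ = ∫ x in Set.Ioc a r, (r - x) :=
        MeasureTheory.setIntegral_congr_fun measurableSet_Ioc
          fun x hx ↦ max_eq_left (sub_nonneg.2 hx.2)
    _ = ∫ x in a..r, (r - x) := (intervalIntegral.integral_of_le har).symm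
    _ = (r - a) ^ 2 / 2 := by
        simp [intervalIntegral.integral_comp_sub_left (fun x : ℝ ↦ x)]

lemma integral_tent_s10 {r : ℝ} (hr : 0 ≤ r) (c : ℝ) : ∫ x, tent c r x = r ^ 2 := by
  calc ∫ x, tent c r x
      = ∫ x : ℝ, max (r - |x|) 0 :=
        MeasureTheory.integral_sub_right_eq_self (fun x ↦ max (r - |x|) 0) c
    _ = 2 * ∫ x in Set.Ioi 0, max (r - x) 0 := integral_comp_abs (f := fun x ↦ max (r - x) 0)
    _ = r ^ 2 := by rw [setIntegral_Ioi_max_sub_zero hr]; ring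

lemma intervalIntegral_tent {a b c r : ℝ} (hr : 0 ≤ r) (ha : a ≤ c - r) (hb : c + r ≤ b) :
    ∫ x in a..b, tent c r x = r ^ 2 := by
  rw [intervalIntegral.integral_eq_integral_of_support_subset
    ((support_tent_subset c r).trans (Set.Ioc_subset_Ioc ha hb)), integral_tent_s10 hr c]

lemma min_one_sub_eq_tent {u : ℝ} (hu : u ∈ Set.Icc (0 : ℝ) 1) :
    min u (1 - u) = tent (1 / 2) (1 / 2) u := by
  obtain ⟨h0, h1⟩ := hu
  grind [tent]

lemma integral_min_one_sub : ∫ u in (0 : ℝ)..1, min u (1 - u) = 1 / 4 := by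
  calc ∫ u in (0 : ℝ)..1, min u (1 - u)
      = ∫ u in (0 : ℝ)..1, tent (1 / 2) (1 / 2) u :=
        intervalIntegral.integral_congr fun u hu ↦
          min_one_sub_eq_tent (by rwa [Set.uIcc_of_le zero_le_one] at hu)
    _ = (1 / 2) ^ 2 := intervalIntegral_tent (by norm_num) (by norm_num) (by norm_num)
    _ = 1 / 4 := by norm_num

@[fun_prop]
lemma continuous_Bupper {X : Type*} [TopologicalSpace X] {f g : X → ℝ} (t : ℝ)
    (hf : Continuous f) (hg : Continuous g) : Continuous fun x ↦ Bupper t (f x) (g x) := by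
  unfold Bupper
  fun_prop

lemma Bupper_diag (t u : ℝ) : Bupper t u u = u - tent (1 / 2) ((1 - t) / 4) u := by
  have cap_eq : (1 + t) / 4 + max (u - 1 / 2) 0 + max (u - 1 / 2) 0
      = u - ((1 - t) / 4 - |u - 1 / 2|) := by grind
  rw [Bupper, cap_eq, min_self, tent, max_comm, ← min_sub_sub_left, sub_zero]

lemma Bupper_antidiag (t u : ℝ) :
    Bupper t u (1 - u) = min u (1 - u) - 2 * tent (1 / 2) ((1 - t) / 8) u := by
  have cap_eq : (1 + t) / 4 + max (u - 1 / 2) 0 + max (1 - u - 1 / 2) 0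
      = min u (1 - u) - 2 * ((1 - t) / 8 - |u - 1 / 2|) := by grind
  rw [Bupper, cap_eq, tent, max_comm, mul_max_of_nonneg _ _ zero_le_two, ← min_sub_sub_left,
    mul_zero, sub_zero]

lemma integral_Bupper_diag {t : ℝ} (ht : t ∈ Set.Icc (-1 : ℝ) 1) :
    ∫ u in (0 : ℝ)..1, Bupper t u u = 1 / 2 - ((1 - t) / 4) ^ 2 := by
  obtain ⟨ht_lower, ht_upper⟩ := ht
  have tent_area : ∫ u in (0 : ℝ)..1, tent (1 / 2) ((1 - t) / 4) u = ((1 - t) / 4) ^ 2 :=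
    intervalIntegral_tent (by linarith) (by linarith) (by linarith)
  simp only [Bupper_diag]
  rw [intervalIntegral.integral_sub (Continuous.intervalIntegrable (by fun_prop) _ _)
    (Continuous.intervalIntegrable (by fun_prop) _ _), tent_area, integral_id]
  norm_num

lemma integral_Bupper_antidiag {t : ℝ} (ht : t ∈ Set.Icc (-3 : ℝ) 1) :
    ∫ u in (0 : ℝ)..1, Bupper t u (1 - u) = 1 / 4 - 2 * ((1 - t) / 8) ^ 2 := by
  obtain ⟨ht_lower, ht_upper⟩ := ht
  have tent_area : ∫ u in (0 : ℝ)..1, tent (1 / 2) ((1 - t) / 8) u = ((1 - t) / 8) ^ 2 :=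
    intervalIntegral_tent (by linarith) (by linarith) (by linarith)
  simp only [Bupper_antidiag]
  rw [intervalIntegral.integral_sub (Continuous.intervalIntegrable (by fun_prop) _ _)
    (Continuous.intervalIntegrable (by fun_prop) _ _), intervalIntegral.integral_const_mul,
    tent_area, integral_min_one_sub]

/-- Gini's gamma of the upper bound copula `B̄_t` equals `1 − (3/8)(1−t)²`. -/
theorem gamma_Bupper (t : ℝ) (ht : t ∈ Set.Icc (-1 : ℝ) 1) :
    4 * (∫ u in (0:ℝ)..1, (Bupper t u u + Bupper t u (1 - u))) - 2
      = 1 - 3 / 8 * (1 - t) ^ 2 := by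
  have diag_integrable : IntervalIntegrable (fun u ↦ Bupper t u u) MeasureTheory.volume 0 1 :=
    Continuous.intervalIntegrable (by fun_prop) _ _
  have antidiag_integrable :
      IntervalIntegrable (fun u ↦ Bupper t u (1 - u)) MeasureTheory.volume 0 1 :=
    Continuous.intervalIntegrable (by fun_prop) _ _
  rw [intervalIntegral.integral_add diag_integrable antidiag_integrable, integral_Bupper_diag ht,
    integral_Bupper_antidiag (Set.Icc_subset_Icc_left (by norm_num) ht)]
  ring
end

section
/- Let a, b ∈ [0,1] and 0 ≤ c ≤ min{a, b, 1−a, 1−b, |b−a|}, and set d₁ = max(a+b−1,0) + c. Then Q(C̲^{a,b,c}, C̲^{a,b,c}) = 4·∫₀¹ C̲^{a,b,c}(u, S(u)) du − 1 = 4d₁(1−a−b+d₁) − 1, where S is the support map of C̲^{a,b,c} given by S(u) = 1−u for u ∈ [0, a−d₁] ∪ [1−b+d₁, 1], S(u) = a+b−d₁−u for u ∈ (a−d₁, a], and S(u) = 1+d₁−u for u ∈ (a, 1−b+d₁). -/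
/-- The lower bound copula `C̲^{a,b,c}` of the asymmetry construction, where
`d₁ = max(a+b−1,0) + c`. -/
noncomputable def CLow (a b c u v : ℝ) : ℝ :=
  max (max (u + v - 1) 0)
    (min (min (max (a + b - 1) 0 + c) (u - a + (max (a + b - 1) 0 + c)))
      (min (v - b + (max (a + b - 1) 0 + c)) (u + v - a - b + (max (a + b - 1) 0 + c))))

/-- The support map `S` of `C̲^{a,b,c}`: `S(u) = 1−u` on `[0, a−d₁] ∪ [1−b+d₁, 1]`,
`S(u) = a+b−d₁−u` on `(a−d₁, a]`, and `S(u) = 1+d₁−u` on `(a, 1−b+d₁)`. -/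
noncomputable def SLow (a b d₁ u : ℝ) : ℝ :=
  if u ≤ a - d₁ then 1 - u
  else if u ≤ a then a + b - d₁ - u
  else if u < 1 - b + d₁ then 1 + d₁ - u
  else 1 - u

/-! The support of `C̲^{a,b,c}` lies in the region where `C̲^{a,b,c}` agrees with the
Fréchet–Hoeffding lower bound `W(u,v) = max(u+v−1, 0)`. On the support, `u + S(u) − 1` is `d₁` over
the interval `(a, 1−b+d₁)` and at most `0` elsewhere, so the integral is `d₁` times the length
of that interval. -/

open MeasureTheory Set

theorem intervalIntegral_indicator_Ioo_const {E : Type*} [NormedAddCommGroup E] [NormedSpace ℝ E]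
    [CompleteSpace E] {x y s t : ℝ} (hxs : x ≤ s) (hst : s ≤ t) (hty : t ≤ y) (k : E) :
    ∫ u in x..y, (Ioo s t).indicator (fun _ ↦ k) u = (t - s) • k := by
  have h_subset : Ioo s t ⊆ Ioc x y := Ioo_subset_Ioc_self.trans (Ioc_subset_Ioc hxs hty)
  rw [intervalIntegral.integral_of_le (hxs.trans (hst.trans hty)),
    setIntegral_indicator measurableSet_Ioo, inter_eq_right.mpr h_subset, setIntegral_const,
    Real.volume_real_Ioo_of_le hst]

/-- The Fréchet–Hoeffding lower bound `W`, the pointwise smallest copula. -/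
noncomputable def frechetLower (u v : ℝ) : ℝ :=
  max (u + v - 1) 0

/-- The pointwise smallest copula with value `d` at `(a, b)`, for `d` between `W(a, b)` and
`min(a, b)`. It is `C̲^{a,b,c}` parametrized by `d = d₁` instead of `c`, with the minimum of four
terms written as `d − (a−u)⁺ − (b−v)⁺`. -/
noncomputable def lowerBoundThrough (a b d u v : ℝ) : ℝ :=
  max (frechetLower u v) (d - max (a - u) 0 - max (b - v) 0)

theorem min_min_eq_sub_max_sub_max (a b d u v : ℝ) :
    min (min d (u - a + d)) (min (v - b + d) (u + v - a - b + d)) =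
      d - max (a - u) 0 - max (b - v) 0 := by
  grind

theorem CLow_eq_lowerBoundThrough (a b c : ℝ) :
    CLow a b c = lowerBoundThrough a b (max (a + b - 1) 0 + c) := by
  funext u v
  rw [CLow, min_min_eq_sub_max_sub_max, lowerBoundThrough, frechetLower]

theorem lowerBoundThrough_SLow_eq_frechetLower (a b d u : ℝ) :
    lowerBoundThrough a b d u (SLow a b d u) = frechetLower u (SLow a b d u) := by
  refine max_eq_left ?_
  have ha_le := le_max_left (a - u) 0
  have ha_nonneg := le_max_right (a - u) 0
  have hb_le := le_max_left (b - SLow a b d u) 0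
  have hb_nonneg := le_max_right (b - SLow a b d u) 0
  unfold SLow at hb_le hb_nonneg ⊢
  split_ifs at hb_le hb_nonneg ⊢ with h_left h_mid h_right
  · exact le_max_of_le_right (by linarith)
  · exact le_max_of_le_right (by linarith)
  · exact le_max_of_le_left (by linarith)
  · exact le_max_of_le_right (by linarith)

theorem frechetLower_SLow {a b d : ℝ} (hd : 0 ≤ d) (habd : a + b - 1 ≤ d) (u : ℝ) :
    frechetLower u (SLow a b d u) = (Ioo a (1 - b + d)).indicator (fun _ ↦ d) u := by
  unfold frechetLower SLow
  split_ifs with h_left h_mid h_right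
  · rw [indicator_of_notMem fun hu ↦ by linarith [hu.1]]
    exact max_eq_right (by linarith)
  · rw [indicator_of_notMem fun hu ↦ hu.1.not_ge h_mid]
    exact max_eq_right (by linarith)
  · have hu : u ∈ Ioo a (1 - b + d) := ⟨not_le.mp h_mid, h_right⟩
    rw [indicator_of_mem hu, add_sub_cancel, add_sub_cancel_left]
    exact max_eq_left hd
  · rw [indicator_of_notMem fun hu ↦ h_right hu.2]
    exact max_eq_right (by linarith)

theorem integral_lowerBoundThrough_SLow {a b d : ℝ} (ha : 0 ≤ a) (hd : 0 ≤ d)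
    (hdb : d ≤ b) (habd : a + b - 1 ≤ d) :
    ∫ u in (0 : ℝ)..1, lowerBoundThrough a b d u (SLow a b d u) = d * (1 - a - b + d) := by
  simp only [lowerBoundThrough_SLow_eq_frechetLower, frechetLower_SLow hd habd]
  rw [intervalIntegral_indicator_Ioo_const ha (by linarith) (by linarith), smul_eq_mul]
  ring

theorem Q_CLow_CLow_general (a b c : ℝ) (ha : 0 ≤ a) (hc : 0 ≤ c) (hcb : c ≤ b)
    (hca : c ≤ 1 - a) (d₁ : ℝ) (hd : d₁ = max (a + b - 1) 0 + c) :
    4 * (∫ u in (0 : ℝ)..1, CLow a b c u (SLow a b d₁ u)) - 1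
      = 4 * d₁ * (1 - a - b + d₁) - 1 := by
  have hd_nonneg : 0 ≤ d₁ := hd ▸ add_nonneg (le_max_right _ _) hc
  have hd_ge : a + b - 1 ≤ d₁ := hd ▸ le_add_of_le_of_nonneg (le_max_left _ _) hc
  have hd_le : d₁ ≤ b := by
    rw [hd, ← le_sub_iff_add_le]
    exact max_le (by linarith) (sub_nonneg.mpr hcb)
  rw [CLow_eq_lowerBoundThrough, ← hd, integral_lowerBoundThrough_SLow ha hd_nonneg hd_le hd_ge,
    mul_assoc]

/-- `Q(C̲^{a,b,c}, C̲^{a,b,c}) = 4d₁(1−a−b+d₁) − 1`. -/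
theorem Q_CLow_CLow (a b c : ℝ) (ha : a ∈ Set.Icc (0:ℝ) 1) (hb : b ∈ Set.Icc (0:ℝ) 1)
    (hc0 : 0 ≤ c)
    (hc : c ≤ min (min a b) (min (min (1 - a) (1 - b)) |b - a|))
    (d₁ : ℝ) (hd : d₁ = max (a + b - 1) 0 + c) :
    4 * (∫ u in (0:ℝ)..1, CLow a b c u (SLow a b d₁ u)) - 1
      = 4 * d₁ * (1 - a - b + d₁) - 1 := by
  simp only [le_min_iff] at hc
  exact Q_CLow_CLow_general a b c ha.1 hc0 hc.1.2 hc.2.1.1 d₁ hd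
end

section
/- Let a, b ∈ [0,1] and 0 ≤ c ≤ min{a, b, 1−a, 1−b, |b−a|}, and set d₂ = min(a,b) − c. Then the concordance of the independence copula Π with C̄^{b,a,c} satisfies Q(Π, C̄^{b,a,c}) = 4·∫₀¹∫₀¹ C̄^{b,a,c}(u,v) du dv − 1 = 1/3 − 2(a+b−2d₂)(a−d₂)(b−d₂). -/
/-- The upper bound copula `C̄^{b,a,c}` of the asymmetry construction, where
`d₂ = min(a,b) − c`. -/
noncomputable def CUp (a b c u v : ℝ) : ℝ :=
  min (min u v)
    (max (max (min a b - c) (u - b + (min a b - c)))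
      (max (v - a + (min a b - c)) (u + v - a - b + (min a b - c))))

/-!
Write `M u v = min u v` and `x⁺ = max x 0`. The copula is `M` minus the gap
`(min u v - d₂ - (u - b)⁺ - (v - a)⁺)⁺`, and `∫∫ M = 1/3`. For fixed `u`, with `k = (u - b)⁺`, the
gap at `v` is the length of the overlap of the intervals `[0, r]` and `[w - s, w]`, where
`r = u - d₂ - k`, `s = a - d₂ - k` and `w = v - d₂ - k`. As a function of `w` this is a trapezoid of
area `r⁺ s⁺`, and `u ↦ r⁺ s⁺` is a tent with base `[d₂, a + b - d₂]` and height
`(a - d₂) (b - d₂)`. Trapezoid and tent are both linear combinations of ramps `(· - t)⁺`, so all the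
integrals reduce to the one of a ramp.
-/

open intervalIntegral

theorem integral_integral_sub_of_continuous {f g : ℝ → ℝ → ℝ}
    (hf : Continuous (Function.uncurry f)) (hg : Continuous (Function.uncurry g))
    (x₀ x₁ y₀ y₁ : ℝ) :
    ∫ x in x₀..x₁, ∫ y in y₀..y₁, (f x y - g x y)
      = (∫ x in x₀..x₁, ∫ y in y₀..y₁, f x y) - ∫ x in x₀..x₁, ∫ y in y₀..y₁, g x y := by
  have inner (x : ℝ) : ∫ y in y₀..y₁, (f x y - g x y)
      = (∫ y in y₀..y₁, f x y) - ∫ y in y₀..y₁, g x y :=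
    integral_sub (hf.uncurry_left x |>.intervalIntegrable y₀ y₁)
      (hg.uncurry_left x |>.intervalIntegrable y₀ y₁)
  simp only [inner]
  exact integral_sub
    (continuous_parametric_intervalIntegral_of_continuous' hf y₀ y₁ |>.intervalIntegrable x₀ x₁)
    (continuous_parametric_intervalIntegral_of_continuous' hg y₀ y₁ |>.intervalIntegrable x₀ x₁)

section Ramp

variable {α β t : ℝ}

theorem integral_max_sub_zero (ht : t ∈ Set.Icc α β) :
    ∫ x in α..β, max (x - t) 0 = (β - t) ^ 2 / 2 := by
  have integrable (x y : ℝ) :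
      IntervalIntegrable (fun z : ℝ ↦ max (z - t) 0) MeasureTheory.volume x y :=
    Continuous.intervalIntegrable (by fun_prop) x y
  have left_part : ∫ x in α..t, max (x - t) 0 = 0 := by
    refine integral_zero_ae (.of_forall fun x hx ↦ ?_)
    rw [Set.uIoc_of_le ht.1] at hx
    exact max_eq_right (sub_nonpos.2 hx.2)
  have right_part : ∫ x in t..β, max (x - t) 0 = ∫ x in t..β, (x - t) := by
    refine integral_congr fun x hx ↦ ?_
    rw [Set.uIcc_of_le ht.2] at hx
    exact max_eq_left (sub_nonneg.2 hx.1)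
  rw [← integral_add_adjacent_intervals (integrable α t) (integrable t β), left_part, right_part,
    integral_comp_sub_right (fun x ↦ x), integral_id]
  ring

theorem integral_min_left (ht : t ∈ Set.Icc α β) :
    ∫ x in α..β, min t x = (β ^ 2 - α ^ 2) / 2 - (β - t) ^ 2 / 2 := by
  have min_eq (x : ℝ) : min t x = x - max (x - t) 0 := by grind
  simp only [min_eq]
  rw [integral_sub (Continuous.intervalIntegrable (by fun_prop) α β)
    (Continuous.intervalIntegrable (by fun_prop) α β), integral_id, integral_max_sub_zero ht]

theorem integral_integral_min : ∫ u in (0 : ℝ)..1, ∫ v in (0 : ℝ)..1, min u v = 1 / 3 := by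
  have inner : Set.EqOn (fun u : ℝ ↦ ∫ v in (0 : ℝ)..1, min u v)
      (fun u ↦ 1 / 2 - (1 - u) ^ 2 / 2) (Set.uIcc 0 1) := by
    intro u hu
    rw [Set.uIcc_of_le zero_le_one] at hu
    simpa using integral_min_left hu
  rw [integral_congr inner, integral_comp_sub_left (fun x ↦ 1 / 2 - x ^ 2 / 2),
    integral_sub (Continuous.intervalIntegrable (by fun_prop) _ _)
      (Continuous.intervalIntegrable (by fun_prop) _ _)]
  norm_num [integral_pow]

end Ramp

/-- The length of the overlap of the intervals `[0, r]` and `[w - s, w]`; it vanishes if `r` or `s`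
is negative. As a function of `w` its graph is a trapezoid. -/
noncomputable def overlap (r s w : ℝ) : ℝ :=
  max (min r w - max (w - s) 0) 0

theorem overlap_eq_second_difference (r s w : ℝ) :
    overlap r s w = max w 0 - max (w - max r 0) 0 - max (w - max s 0) 0
      + max (w - (max r 0 + max s 0)) 0 := by
  unfold overlap
  grind

theorem integral_overlap_sub {α β k r s : ℝ} (hα : α ≤ k) (hβ : k + max r 0 + max s 0 ≤ β) :
    ∫ x in α..β, overlap r s (x - k) = max r 0 * max s 0 := by
  have hr : 0 ≤ max r 0 := le_max_right r 0
  have hs : 0 ≤ max s 0 := le_max_right s 0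
  simp only [overlap_eq_second_difference, sub_sub _ k]
  rw [integral_add, integral_sub, integral_sub]
  · rw [integral_max_sub_zero ⟨hα, by linarith⟩,
      integral_max_sub_zero ⟨by linarith, by linarith⟩,
      integral_max_sub_zero ⟨by linarith, by linarith⟩,
      integral_max_sub_zero ⟨by linarith, by linarith⟩]
    ring
  all_goals exact Continuous.intervalIntegrable (by fun_prop) α β

section Gap

/-- The amount by which the copula `C̄^{b,a,c}` with `d = d₂` falls short of the comonotone copula
`min u v`. -/
noncomputable def comonotoneGap (a b d u v : ℝ) : ℝ :=
  max (min u v - d - max (u - b) 0 - max (v - a) 0) 0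

variable {a b d : ℝ}

theorem CUp_eq_min_sub_comonotoneGap (a b c u v : ℝ) :
    CUp a b c u v = min u v - comonotoneGap a b (min a b - c) u v := by
  unfold CUp comonotoneGap
  generalize min a b - c = d
  have max_eq : max (max d (u - b + d)) (max (v - a + d) (u + v - a - b + d))
      = d + max (u - b) 0 + max (v - a) 0 := by grind
  rw [max_eq]
  grind

theorem continuous_uncurry_comonotoneGap (a b d : ℝ) :
    Continuous (Function.uncurry (comonotoneGap a b d)) := by
  unfold comonotoneGap Function.uncurry
  fun_prop

theorem comonotoneGap_eq_overlap (a b d u v : ℝ) :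
    comonotoneGap a b d u v =
      overlap (u - (d + max (u - b) 0)) (a - (d + max (u - b) 0)) (v - (d + max (u - b) 0)) := by
  unfold comonotoneGap overlap
  rw [min_sub_sub_right, sub_sub_sub_cancel_right, sub_sub (min u v)]

theorem max_mul_max_eq_tent (hda : d ≤ a) (hdb : d ≤ b) (u : ℝ) :
    max (u - (d + max (u - b) 0)) 0 * max (a - (d + max (u - b) 0)) 0
      = (a - d) * max (u - d) 0 - (a + b - 2 * d) * max (u - b) 0
        + (b - d) * max (u - (a + b - d)) 0 := by
  rcases le_total u b with hub | hbu
  · rw [max_eq_right (sub_nonpos.2 hub), max_eq_right (by linarith : u - (a + b - d) ≤ 0), add_zero,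
      max_eq_left (sub_nonneg.2 hda)]
    ring
  · have right_factor : max (a - (d + (u - b))) 0 = a + b - d - u + max (u - (a + b - d)) 0 := by
      grind
    rw [max_eq_left (sub_nonneg.2 hbu), max_eq_left (by linarith : 0 ≤ u - (d + (u - b))),
      max_eq_left (sub_nonneg.2 (hdb.trans hbu)), right_factor]
    ring

theorem integral_comonotoneGap_right (hd : 0 ≤ d) (hda : d ≤ a) (hdb : d ≤ b)
    (hab : a + b - d ≤ 1) {u : ℝ} (hu : u ≤ 1) :
    ∫ v in (0 : ℝ)..1, comonotoneGap a b d u v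
      = (a - d) * max (u - d) 0 - (a + b - 2 * d) * max (u - b) 0
        + (b - d) * max (u - (a + b - d)) 0 := by
  simp only [comonotoneGap_eq_overlap]
  rw [integral_overlap_sub, max_mul_max_eq_tent hda hdb]
  · positivity
  · grind

theorem integral_integral_comonotoneGap (hd : 0 ≤ d) (hda : d ≤ a) (hdb : d ≤ b)
    (hab : a + b - d ≤ 1) :
    ∫ u in (0 : ℝ)..1, ∫ v in (0 : ℝ)..1, comonotoneGap a b d u v
      = (a + b - 2 * d) * (a - d) * (b - d) / 2 := by
  have inner : Set.EqOn (fun u ↦ ∫ v in (0 : ℝ)..1, comonotoneGap a b d u v)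
      (fun u ↦ (a - d) * max (u - d) 0 - (a + b - 2 * d) * max (u - b) 0
        + (b - d) * max (u - (a + b - d)) 0) (Set.uIcc 0 1) := by
    intro u hu
    rw [Set.uIcc_of_le zero_le_one] at hu
    exact integral_comonotoneGap_right hd hda hdb hab hu.2
  rw [integral_congr inner, integral_add, integral_sub]
  · simp only [integral_const_mul]
    rw [integral_max_sub_zero ⟨hd, by linarith⟩,
      integral_max_sub_zero ⟨by linarith, by linarith⟩,
      integral_max_sub_zero ⟨by linarith, hab⟩]
    ring
  all_goals exact Continuous.intervalIntegrable (by fun_prop) 0 1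

end Gap

theorem Q_Pi_CUp_general (a b c : ℝ) (hc0 : 0 ≤ c)
    (hc : c ≤ min (min a b) (min (1 - a) (1 - b))) (d₂ : ℝ) (hd : d₂ = min a b - c) :
    4 * (∫ u in (0:ℝ)..1, ∫ v in (0:ℝ)..1, CUp a b c u v) - 1
      = 1 / 3 - 2 * (a + b - 2 * d₂) * (a - d₂) * (b - d₂) := by
  have hd0 : 0 ≤ d₂ := by grind
  have hda : d₂ ≤ a := by grind
  have hdb : d₂ ≤ b := by grind
  have hab : a + b - d₂ ≤ 1 := by grind
  simp only [CUp_eq_min_sub_comonotoneGap, ← hd]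
  rw [integral_integral_sub_of_continuous (f := min) continuous_min
      (continuous_uncurry_comonotoneGap a b d₂),
    integral_integral_min, integral_integral_comonotoneGap hd0 hda hdb hab]
  ring

/-- `Q(Π, C̄^{b,a,c}) = 1/3 − 2(a+b−2d₂)(a−d₂)(b−d₂)`, where `Π` is the independence
copula whose induced measure is the Lebesgue measure on `[0,1]²`. -/
theorem Q_Pi_CUp (a b c : ℝ) (ha : a ∈ Set.Icc (0:ℝ) 1) (hb : b ∈ Set.Icc (0:ℝ) 1)
    (hc0 : 0 ≤ c)
    (hc : c ≤ min (min a b) (min (min (1 - a) (1 - b)) |b - a|))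
    (d₂ : ℝ) (hd : d₂ = min a b - c) :
    4 * (∫ u in (0:ℝ)..1, ∫ v in (0:ℝ)..1, CUp a b c u v) - 1
      = 1 / 3 - 2 * (a + b - 2 * d₂) * (a - d₂) * (b - d₂) :=
  Q_Pi_CUp_general a b c hc0 (hc.trans (min_le_min_left _ (min_le_left _ _))) d₂ hd
end
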